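/- Let m ≥ 1 and let F = (f_1, f_2) be a simple multigerm in ℂ^n with f_1 = (t², t^{2m+1}, 0, …, 0), with the 2-jet of f_2 equal to (0, t², 0, …, 0), and with the invariant pair of f_2 greater than or equal to (2, 2m+1). Then F is stably A-equivalent to a multigerm with first component (t², t^{2m+1}) (padded with zeros) and second component one of the following, where n is an integer with m ≤ n: (t^{2n+1}, t²); (t^{2n+1}, t², t^{2n+3}); (0, t², t^{2n+1}). -/

import Mathlib

/-!
Stabilise the multigerm to `ℂ^(d+3)` and write the coordinates as `x, y, z_3, z_4, …`.

After a reparametrisation the second component has `y = t²`. Split every other coordinate into its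
even and odd part; let `2k+1` be the least order of an odd part. It is a value of the second
component, so the condition on the invariant pair shows that `k` exists and `m ≤ k`.

The equation `P = y² - x^(2m+1)` of the cusp vanishes on the first component. On the second one it
is `t⁴` times a unit of the local ring `ℂ{t²} + t^(2k+1) ℂ{t²}`, hence adding multiples of `P` to
the coordinates removes all even terms and all odd terms of order at least `2k+5`. Every coordinate
other than `y` is now `t^(2k+1) (a_j + b_j t²)`, with some `a_j ≠ 0`:

* if `a_j ≠ 0` for some `z_j`, then `z_j`, which vanishes on the first component, clears the other
  coordinates and leaves `(0, t², t^(2k+1))`;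
* otherwise a coordinate change preserving the cusp, weighted by a function of `y`, brings `x` to
  `t^(2k+1)`, and the remaining terms `b_j t^(2k+3)` of the `z_j` give
  `(t^(2k+1), t², t^(2k+3))` if some `b_j ≠ 0`, and `(t^(2k+1), t²)` if not.
-/

open scoped Topology

namespace CurveSing

/-- Pad a curve in `ℂ^d` to a curve in `ℂ^n` by appending zero coordinates. -/
def pad (d n : ℕ) (f : ℂ → Fin d → ℂ) : ℂ → Fin n → ℂ :=
  fun t j => if hj : (j : ℕ) < d then f t ⟨(j : ℕ), hj⟩ else 0

/-- The curve `t ↦ (0,…,0,t,0,…,0)` (the `i`-th coordinate axis of `ℂ^n`). -/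
def axis (n i : ℕ) : ℂ → Fin n → ℂ := fun t j => if (j : ℕ) = i then t else 0

/-- The multigerm consisting of the `n` coordinate axes of `ℂ^n`. -/
def Gn (n : ℕ) : Fin n → ℂ → Fin n → ℂ := fun i => axis n (i : ℕ)

/-- A (representative of a) curve germ in `ℂ^n`. -/
def IsCurveGerm (n : ℕ) (f : ℂ → Fin n → ℂ) : Prop :=
  AnalyticAt ℂ f 0 ∧ f 0 = 0

/-- A multigerm with `k` components in `ℂ^n`: each component is a curve germ and the
images of sufficiently small representatives of distinct components meet only at `0`. -/
def IsMultigerm (n k : ℕ) (F : Fin k → ℂ → Fin n → ℂ) : Prop :=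
  (∀ i, IsCurveGerm n (F i)) ∧
  ∃ ε > (0 : ℝ), ∀ i j : Fin k, i ≠ j → ∀ s t : ℂ,
    ‖s‖ < ε → ‖t‖ < ε → F i s = F j t → F i s = 0

/-- A germ of a biholomorphism `(E,0) → (E,0)`. -/
def IsBiholoGerm {E : Type*} [NormedAddCommGroup E] [NormedSpace ℂ E] (g : E → E) : Prop :=
  AnalyticAt ℂ g 0 ∧ g 0 = 0 ∧
  ∃ g' : E → E, AnalyticAt ℂ g' 0 ∧ g' 0 = 0 ∧
    (∀ᶠ x in 𝓝 (0 : E), g' (g x) = x) ∧ (∀ᶠ x in 𝓝 (0 : E), g (g' x) = x)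

/-- `A`-equivalence of multigerms with `k` components in `ℂ^n`. -/
def AEquiv (n k : ℕ) (F F' : Fin k → ℂ → Fin n → ℂ) : Prop :=
  ∃ g : (Fin n → ℂ) → Fin n → ℂ, IsBiholoGerm g ∧
    ∃ h : Fin k → ℂ → ℂ, (∀ i, IsBiholoGerm (h i)) ∧
      ∀ i, (fun t => g (F i t)) =ᶠ[𝓝 (0 : ℂ)] fun t => F' i (h i t)

/-- Stable `A`-equivalence: the two multigerms become `A`-equivalent after the standard
inclusions into a common `ℂ^N`. -/
def StablyAEquiv (n n' k : ℕ) (F : Fin k → ℂ → Fin n → ℂ)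
    (F' : Fin k → ℂ → Fin n' → ℂ) : Prop :=
  ∃ N, n ≤ N ∧ n' ≤ N ∧
    AEquiv N k (fun i => pad n N (F i)) (fun i => pad n' N (F' i))

/-- The `m`-jet of a curve, recorded as the tuple of iterated derivatives at `0`
of orders `0,…,m` (this determines and is determined by the degree-`m` Taylor
polynomial at `0`). -/
noncomputable def jet (n m : ℕ) (f : ℂ → Fin n → ℂ) : Fin (m + 1) → Fin n → ℂ :=
  fun i => iteratedDeriv (i : ℕ) f 0

/-- The `m`-jet of a multigerm. -/
noncomputable def jetF (n k m : ℕ) (F : Fin k → ℂ → Fin n → ℂ) : Fin k → Fin (m + 1) → Fin n → ℂ :=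
  fun i => jet n m (F i)

/-- A multigerm is simple if some neighbourhood of one of its jets meets only finitely
many `A`-equivalence classes of multigerms. -/
def Simple (n k : ℕ) (F : Fin k → ℂ → Fin n → ℂ) : Prop :=
  ∃ m : ℕ, ∃ U : Set (Fin k → Fin (m + 1) → Fin n → ℂ), IsOpen U ∧ jetF n k m F ∈ U ∧
    ∃ (N : ℕ) (R : Fin N → Fin k → ℂ → Fin n → ℂ),
      ∀ G : Fin k → ℂ → Fin n → ℂ, IsMultigerm n k G → jetF n k m G ∈ U →
        ∃ i, AEquiv n k G (R i)

/-- A curve germ is regular if its derivative at `0` does not vanish. -/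
def IsRegular (n : ℕ) (f : ℂ → Fin n → ℂ) : Prop := deriv f 0 ≠ 0

/-- `F` is stably `A`-equivalent to the pair with first component the regular curve
`(t,0,…,0)` and second component `g` (a curve in `ℂ^{d'}`). -/
def PairNF (d : ℕ) (F : Fin 2 → ℂ → Fin d → ℂ) (d' : ℕ) (g : ℂ → Fin d' → ℂ) : Prop :=
  StablyAEquiv d d' 2 F ![axis d' 0, g]

end CurveSing

namespace CurveSing

/-- The order of vanishing of a function `ℂ → ℂ` at `0`: the least order of a
non-vanishing iterated derivative at `0`. -/
noncomputable def ordAt (f : ℂ → ℂ) : ℕ := sInf {k | iteratedDeriv k f 0 ≠ 0}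

/-- The value semigroup `S₀(f)` of a curve germ: the set of orders `ord (φ ∘ f)` over
analytic germs `φ : (ℂ^n,0) → (ℂ,0)` with `φ ∘ f` not identically zero near `0`. -/
def valueSemigroup (n : ℕ) (f : ℂ → Fin n → ℂ) : Set ℕ :=
  { v | ∃ φ : (Fin n → ℂ) → ℂ, AnalyticAt ℂ φ 0 ∧ φ 0 = 0 ∧
      (∃ k, iteratedDeriv k (fun t => φ (f t)) 0 ≠ 0) ∧
      v = ordAt fun t => φ (f t) }

/-- The first entry `p` of the invariant pair: the smallest positive element of the
value semigroup. -/
noncomputable def invPairFst (n : ℕ) (f : ℂ → Fin n → ℂ) : ℕ :=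
  sInf {v | v ∈ valueSemigroup n f ∧ 0 < v}

/-- The second entry `q` of the invariant pair: the smallest element of the value
semigroup greater than `p` and not a multiple of `p`. -/
noncomputable def invPairSnd (n : ℕ) (f : ℂ → Fin n → ℂ) : ℕ :=
  sInf {v | v ∈ valueSemigroup n f ∧ invPairFst n f < v ∧ ¬ invPairFst n f ∣ v}

end CurveSing

namespace CurveSing

/-! ### Germs of analytic functions -/

section AnalyticGerms

lemma eventuallyEq_comp {X Y Z : Type*} [TopologicalSpace X] [TopologicalSpace Y] {x : X} {y : Y}
    {h : X → Y} {f g : Y → Z} (hfg : f =ᶠ[𝓝 y] g) (hh : ContinuousAt h x) (hx : h x = y) :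
    (fun t => f (h t)) =ᶠ[𝓝 x] fun t => g (h t) := by
  subst hx
  exact hfg.comp_tendsto hh

lemma analyticAt_apply {𝕜 ι : Type*} [NontriviallyNormedField 𝕜] [Fintype ι] (i : ι) (v : ι → 𝕜) :
    AnalyticAt 𝕜 (fun v : ι → 𝕜 => v i) v :=
  (ContinuousLinearMap.proj (R := 𝕜) (φ := fun _ : ι => 𝕜) i).analyticAt v

lemma analyticOrderAt_pow_zero {𝕜 : Type*} [NontriviallyNormedField 𝕜] (e : ℕ) :
    analyticOrderAt (fun t : 𝕜 => t ^ e) 0 = e := by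
  simpa [Pi.pow_def] using analyticOrderAt_centeredMonomial (𝕜 := 𝕜) (z₀ := 0) (n := e)

lemma analyticOrderAt_comp_pow {𝕜 E : Type*} [NontriviallyNormedField 𝕜] [NormedAddCommGroup E]
    [NormedSpace 𝕜 E] {a : 𝕜 → E} (ha : AnalyticAt 𝕜 a 0) {e : ℕ} (he : e ≠ 0) :
    analyticOrderAt (fun t => a (t ^ e)) 0 = analyticOrderAt a 0 * e := by
  have h0 : (0 : 𝕜) ^ e = 0 := zero_pow he
  have := (h0.symm ▸ ha : AnalyticAt 𝕜 a ((0 : 𝕜) ^ e)).analyticOrderAt_comp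
    (g := fun t => t ^ e) (by fun_prop)
  simpa only [Function.comp_def, h0, sub_zero, analyticOrderAt_pow_zero] using this

lemma exists_eventuallyEq_pow_smul_of_analyticAt {𝕜 E : Type*} [NontriviallyNormedField 𝕜]
    [NormedAddCommGroup E] [NormedSpace 𝕜 E] {β : 𝕜 → E} (hβ : AnalyticAt 𝕜 β 0)
    (h0 : ¬ β =ᶠ[𝓝 0] 0) :
    ∃ l : ℕ, ∃ β' : 𝕜 → E, AnalyticAt 𝕜 β' 0 ∧ β' 0 ≠ 0 ∧ β =ᶠ[𝓝 0] fun s => s ^ l • β' s := by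
  obtain ⟨l, hl⟩ := ENat.ne_top_iff_exists.1 fun h => h0 (analyticOrderAt_eq_top.1 h)
  obtain ⟨β', hβ', hβ'0, h⟩ := hβ.analyticOrderAt_eq_natCast.1 hl.symm
  exact ⟨l, β', hβ', hβ'0, h.mono fun s hs => by rw [hs, sub_zero]⟩

lemma exists_analyticAt_hasSum_subseries {𝕜 E : Type*} [NontriviallyNormedField 𝕜]
    [NormedAddCommGroup E] [NormedSpace 𝕜 E] [CompleteSpace E] {f : 𝕜 → E}
    {p : FormalMultilinearSeries 𝕜 𝕜 E} {x : 𝕜} (hp : HasFPowerSeriesAt f p x) (e i : ℕ) :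
    ∃ a : 𝕜 → E, AnalyticAt 𝕜 a 0 ∧
      ∀ᶠ s in 𝓝 (0 : 𝕜), HasSum (fun n => s ^ n • p.coeff (e * n + i)) (a s) := by
  obtain ⟨r, hr0, hr⟩ := ENNReal.lt_iff_exists_nnreal_btwn.1 hp.radius_pos
  have hr0' : 0 < r := by exact_mod_cast hr0
  obtain ⟨C, -, hC⟩ := p.norm_mul_pow_le_of_lt_radius hr
  let q : FormalMultilinearSeries 𝕜 𝕜 E := fun n =>
    ContinuousMultilinearMap.mkPiRing 𝕜 (Fin n) (p.coeff (e * n + i))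
  have hq : ((r ^ e : NNReal) : ENNReal) ≤ q.radius := by
    refine q.le_radius_of_bound (C / r ^ i) fun n => ?_
    rw [ContinuousMultilinearMap.norm_mkPiRing, le_div_iff₀ (by positivity)]
    calc ‖p.coeff (e * n + i)‖ * ((r ^ e : NNReal) : ℝ) ^ n * (r : ℝ) ^ i
        = ‖p (e * n + i)‖ * (r : ℝ) ^ (e * n + i) := by
          rw [FormalMultilinearSeries.norm_apply_eq_norm_coef]; push_cast; ring
      _ ≤ C := hC _
  have hq0 : 0 < q.radius := lt_of_lt_of_le (by positivity) hq
  have hsum := (q.hasFPowerSeriesOnBall hq0).hasFPowerSeriesAt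
  refine ⟨q.sum, hsum.analyticAt, ?_⟩
  filter_upwards [hsum.eventually_hasSum] with s hs
  simpa [q] using hs

lemma exists_even_odd {𝕜 E : Type*} [NontriviallyNormedField 𝕜] [NormedAddCommGroup E]
    [NormedSpace 𝕜 E] [CompleteSpace E] {f : 𝕜 → E} (hf : AnalyticAt 𝕜 f 0) :
    ∃ a b : 𝕜 → E, AnalyticAt 𝕜 a 0 ∧ AnalyticAt 𝕜 b 0 ∧
      f =ᶠ[𝓝 0] fun t => a (t ^ 2) + t • b (t ^ 2) := by
  obtain ⟨p, hp⟩ := hf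
  obtain ⟨a, ha, has⟩ := exists_analyticAt_hasSum_subseries hp 2 0
  obtain ⟨b, hb, hbs⟩ := exists_analyticAt_hasSum_subseries hp 2 1
  have hsq : Filter.Tendsto (fun t : 𝕜 => t ^ 2) (𝓝 0) (𝓝 0) := by
    simpa using (continuous_pow (M := 𝕜) 2).tendsto 0
  refine ⟨a, b, ha, hb, ?_⟩
  filter_upwards [hp.eventually_hasSum, hsq.eventually has, hsq.eventually hbs] with t hf ha hb
  have hf : HasSum (fun n => t ^ n • p.coeff n) (f t) := by simpa using hf
  refine hf.unique (HasSum.even_add_odd ?_ ?_)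
  · simpa [pow_mul] using ha
  · simpa [pow_mul, pow_succ', mul_smul] using hb.const_smul t

lemma exists_analyticAt_pow_eq {E : Type*} [NormedAddCommGroup E] [NormedSpace ℂ E] {u : E → ℂ}
    {x : E} (hu : AnalyticAt ℂ u x) (hx : u x ≠ 0) {e : ℕ} (he : e ≠ 0) :
    ∃ ρ : E → ℂ, AnalyticAt ℂ ρ x ∧ ρ x ≠ 0 ∧ (fun v => ρ v ^ e) =ᶠ[𝓝 x] u := by
  obtain ⟨c, hc⟩ := IsAlgClosed.exists_pow_nat_eq (u x) (Nat.pos_of_ne_zero he)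
  have hc0 : c ≠ 0 := by rintro rfl; exact hx (by rw [← hc, zero_pow he])
  have he' : (e : ℂ) ≠ 0 := Nat.cast_ne_zero.2 he
  have hlog : AnalyticAt ℂ (fun v => Complex.log (u v / u x)) x :=
    (hu.div analyticAt_const hx).clog (by simp [hx])
  refine ⟨fun v => c * Complex.exp (Complex.log (u v / u x) / e),
    analyticAt_const.mul (hlog.div analyticAt_const he').cexp,
    mul_ne_zero hc0 (Complex.exp_ne_zero _), ?_⟩
  filter_upwards [hu.continuousAt.eventually_ne hx] with v hv
  rw [mul_pow, hc, ← Complex.exp_nat_mul, mul_div_cancel₀ _ he',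
    Complex.exp_log (div_ne_zero hv hx), mul_div_cancel₀ _ hx]

end AnalyticGerms

/-! ### Germs of biholomorphisms -/

section IsBiholoGerm

variable {E : Type*} [NormedAddCommGroup E] [NormedSpace ℂ E]

lemma isBiholoGerm_of_hasFDerivAt [FiniteDimensional ℂ E] {g : E → E} (hg : AnalyticAt ℂ g 0)
    (h0 : g 0 = 0) {L : E →L[ℂ] E} (hL : HasFDerivAt g L 0) (hinj : Function.Injective L) :
    IsBiholoGerm g := by
  have : CompleteSpace E := FiniteDimensional.complete ℂ E
  let e : E ≃L[ℂ] E :=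
    (LinearEquiv.ofInjectiveEndo (L : E →ₗ[ℂ] E) hinj).toContinuousLinearEquiv
  have he : (e : E →L[ℂ] E) = L := by
    ext v; simp [e]
  have hc : ContDiffAt ℂ ⊤ g 0 := hg.contDiffAt
  have hL' : HasFDerivAt g (e : E →L[ℂ] E) 0 := he ▸ hL
  let R := hc.toOpenPartialHomeomorph g hL' (by simp)
  have hs : (0 : E) ∈ R.source := hc.mem_toOpenPartialHomeomorph_source hL' (by simp)
  have ht : (0 : E) ∈ R.target := by
    simpa [h0] using hc.image_mem_toOpenPartialHomeomorph_target hL' (by simp)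
  have hinv : ContDiffAt ℂ ⊤ R.symm 0 := h0 ▸ hc.to_localInverse hL' (by simp)
  refine ⟨hg, h0, R.symm, hinv.analyticAt, ?_, R.eventually_left_inverse hs,
    R.eventually_right_inverse ht⟩
  simpa [show R 0 = 0 from h0] using R.left_inv hs

lemma isBiholoGerm_id : IsBiholoGerm fun x : E => x :=
  ⟨analyticAt_id, rfl, fun x => x, analyticAt_id, rfl, by simp, by simp⟩

lemma IsBiholoGerm.comp {f g : E → E} (hf : IsBiholoGerm f) (hg : IsBiholoGerm g) :
    IsBiholoGerm fun x => f (g x) := by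
  obtain ⟨fa, f0, f', fa', f0', fl, fr⟩ := hf
  obtain ⟨ga, g0, g', ga', g0', gl, gr⟩ := hg
  refine ⟨fa.comp_of_eq ga g0, by simp [f0, g0], fun x => g' (f' x), ga'.comp_of_eq fa' f0',
    by simp [f0', g0'], ?_, ?_⟩
  · filter_upwards [gl, eventuallyEq_comp fl ga.continuousAt g0] with x hx hx'
    rw [hx', hx]
  · filter_upwards [fr, eventuallyEq_comp gr fa'.continuousAt f0'] with x hx hx'
    rw [hx', hx]

/-- The derivative at `0` is a rank one perturbation of the identity. -/
lemma isBiholoGerm_add_smul [FiniteDimensional ℂ E] {Φ : E → ℂ} {V : E → E} {φ : E →L[ℂ] ℂ}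
    (hΦ : AnalyticAt ℂ Φ 0) (hV : AnalyticAt ℂ V 0) (h0 : Φ 0 = 0) (hφ : HasFDerivAt Φ φ 0)
    (hne : φ (V 0) ≠ -1) : IsBiholoGerm fun v => v + Φ v • V v := by
  have hd : HasFDerivAt (fun v => v + Φ v • V v)
      (ContinuousLinearMap.id ℂ E + φ.smulRight (V 0)) 0 := by
    simpa [h0] using (hasFDerivAt_id (𝕜 := ℂ) (0 : E)).fun_add
      (hφ.fun_smul hV.differentiableAt.hasFDerivAt)
  refine isBiholoGerm_of_hasFDerivAt (by fun_prop) (by simp [h0]) hd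
    ((injective_iff_map_eq_zero _).2 fun v hv => ?_)
  have hv : v + φ v • V 0 = 0 := by simpa using hv
  have hφv : φ v * (1 + φ (V 0)) = 0 := by
    have := congrArg φ hv
    simp only [map_add, map_smul, smul_eq_mul, map_zero] at this
    linear_combination this
  have : φ v = 0 := (mul_eq_zero.1 hφv).resolve_right fun h => hne (by linear_combination h)
  simpa [this] using hv

lemma isBiholoGerm_mul {A : Type*} [NormedCommRing A] [NormedAlgebra ℂ A] [FiniteDimensional ℂ A]
    {w : A → A} (hw : AnalyticAt ℂ w 0) (h0 : IsUnit (w 0)) : IsBiholoGerm fun v => v * w v := by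
  have hd := (hasFDerivAt_id (𝕜 := ℂ) (0 : A)).fun_mul hw.differentiableAt.hasFDerivAt
  refine isBiholoGerm_of_hasFDerivAt (analyticAt_id.mul hw) (by simp) hd
    ((injective_iff_map_eq_zero _).2 fun v hv => ?_)
  have hv : w 0 * v = 0 := by simpa using hv
  exact (h0.mul_right_eq_zero).1 hv

lemma exists_isBiholoGerm_pow_eq {f : ℂ → ℂ} (hf : AnalyticAt ℂ f 0) {n : ℕ} (hn : n ≠ 0)
    (hord : analyticOrderAt f 0 = n) :
    ∃ h, IsBiholoGerm h ∧ f =ᶠ[𝓝 0] fun t => h t ^ n := by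
  obtain ⟨u, hu, hu0, hfu⟩ := (hf.analyticOrderAt_eq_natCast).1 hord
  obtain ⟨ρ, hρ, hρ0, hρu⟩ := exists_analyticAt_pow_eq hu hu0 hn
  refine ⟨_, isBiholoGerm_mul hρ hρ0.isUnit, ?_⟩
  filter_upwards [hfu, hρu] with t ht ht'
  rw [ht, mul_pow, ht']
  simp

lemma IsBiholoGerm.deriv_ne_zero {h : ℂ → ℂ} (hh : IsBiholoGerm h) : deriv h 0 ≠ 0 := by
  obtain ⟨ha, h0, h', ha', -, hl, -⟩ := hh
  intro hd
  have hh : HasDerivAt h 0 0 := by simpa only [hd] using ha.differentiableAt.hasDerivAt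
  have hh' : HasDerivAt h' (deriv h' 0) (h 0) := h0.symm ▸ ha'.differentiableAt.hasDerivAt
  have hid : HasDerivAt (fun t => t) (deriv h' 0 * 0) 0 :=
    (hh'.comp 0 hh).congr_of_eventuallyEq (hl.mono fun _ ht => ht.symm)
  simpa using (hasDerivAt_id' (0 : ℂ)).unique hid

lemma IsBiholoGerm.exists_mul_comp_eq_self {h : ℂ → ℂ} (hh : IsBiholoGerm h) :
    ∃ η : ℂ → ℂ, AnalyticAt ℂ η 0 ∧ ∀ᶠ t in 𝓝 0, h t * η (h t) = t := by
  obtain ⟨-, -, h', ha', h0', hl, -⟩ := hh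
  obtain ⟨η, hη, hη'⟩ := ha'.exists_eq_sum_add_pow_mul 1
  refine ⟨η, hη, hl.mono fun t ht => ?_⟩
  nth_rw 3 [← ht]
  simpa [h0'] using (hη' (h t)).symm

end IsBiholoGerm

lemma AEquiv.trans {n k : ℕ} {F G H : Fin k → ℂ → Fin n → ℂ} (hFG : AEquiv n k F G)
    (hGH : AEquiv n k G H) : AEquiv n k F H := by
  obtain ⟨g, hg, h, hh, hFG⟩ := hFG
  obtain ⟨g', hg', h', hh', hGH⟩ := hGH
  refine ⟨fun x => g' (g x), hg'.comp hg, fun i t => h' i (h i t), fun i => (hh' i).comp (hh i),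
    fun i => ?_⟩
  filter_upwards [hFG i, eventuallyEq_comp (hGH i) (hh i).1.continuousAt (hh i).2.1] with t e e'
  rw [e, e']

/-! ### The value semigroup -/

section ValueSemigroup

lemma analyticOrderAt_eq_iff_ordAt {g : ℂ → ℂ} (hg : AnalyticAt ℂ g 0) {v : ℕ} :
    analyticOrderAt g 0 = v ↔ (∃ k, iteratedDeriv k g 0 ≠ 0) ∧ v = ordAt g := by
  have hord {n : ℕ} (h : analyticOrderAt g 0 = n) :
      (∃ k, iteratedDeriv k g 0 ≠ 0) ∧ n = ordAt g := by
    obtain ⟨hlt, hn⟩ := (analyticOrderAt_eq_nat_iff_iteratedDeriv_eq_zero hg).1 h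
    refine ⟨⟨n, hn⟩, le_antisymm (le_csInf ⟨n, hn⟩ fun k hk => ?_) (Nat.sInf_le hn)⟩
    exact not_lt.1 fun hkn => hk (hlt k hkn)
  refine ⟨hord, fun ⟨⟨k, hk⟩, hv⟩ => ?_⟩
  have hne : analyticOrderAt g 0 ≠ ⊤ := fun htop =>
    hk <| (natCast_le_analyticOrderAt_iff_iteratedDeriv_eq_zero hg (n := k + 1)).1
      (htop ▸ le_top) k k.lt_succ_self
  obtain ⟨o, ho⟩ := ENat.ne_top_iff_exists.1 hne
  rw [hv, ← (hord ho.symm).2, ho]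

lemma mem_valueSemigroup_iff {n : ℕ} {f : ℂ → Fin n → ℂ} (hf : IsCurveGerm n f) {v : ℕ} :
    v ∈ valueSemigroup n f ↔ ∃ φ : (Fin n → ℂ) → ℂ, AnalyticAt ℂ φ 0 ∧ φ 0 = 0 ∧
      analyticOrderAt (fun t => φ (f t)) 0 = v :=
  exists_congr fun _ => and_congr_right fun hφ => and_congr_right fun _ =>
    (analyticOrderAt_eq_iff_ordAt (hφ.comp_of_eq hf.1 hf.2)).symm

lemma valueSemigroup_subset_of_comp_eventuallyEq {n n' : ℕ} {f : ℂ → Fin n → ℂ}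
    {f' : ℂ → Fin n' → ℂ} {g : (Fin n → ℂ) → Fin n' → ℂ} {h : ℂ → ℂ} (hf : IsCurveGerm n f)
    (hf' : IsCurveGerm n' f') (hg : AnalyticAt ℂ g 0) (hg0 : g 0 = 0) (hh : IsBiholoGerm h)
    (hgf : (fun t => g (f t)) =ᶠ[𝓝 0] fun t => f' (h t)) :
    valueSemigroup n' f' ⊆ valueSemigroup n f := by
  intro v hv
  obtain ⟨φ, hφ, hφ0, hv⟩ := (mem_valueSemigroup_iff hf').1 hv
  refine (mem_valueSemigroup_iff hf).2
    ⟨fun x => φ (g x), hφ.comp_of_eq hg hg0, by simp [hg0, hφ0], ?_⟩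
  calc analyticOrderAt (fun t => φ (g (f t))) 0
      = analyticOrderAt ((fun t => φ (f' t)) ∘ h) 0 :=
        analyticOrderAt_congr (hgf.fun_comp φ)
    _ = v := by rw [analyticOrderAt_comp_of_deriv_ne_zero hh.1 hh.deriv_ne_zero, hh.2.1, hv]

lemma valueSemigroup_eq_of_reparam {n : ℕ} {f f' : ℂ → Fin n → ℂ} {h : ℂ → ℂ}
    (hf : IsCurveGerm n f) (hf' : IsCurveGerm n f') (hh : IsBiholoGerm h)
    (hff' : f =ᶠ[𝓝 0] fun t => f' (h t)) : valueSemigroup n f = valueSemigroup n f' := by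
  obtain ⟨hh, h0, h', hh', h'0, hh'h, hhh'⟩ := hh
  have hf'f : f' =ᶠ[𝓝 0] fun t => f (h' t) := by
    filter_upwards [eventuallyEq_comp hff' hh'.continuousAt h'0, hhh'] with t ht hhh'
    rw [ht, hhh']
  exact (valueSemigroup_subset_of_comp_eventuallyEq hf' hf analyticAt_id rfl
    ⟨hh', h'0, h, hh, h0, hhh', hh'h⟩ hf'f).antisymm
    (valueSemigroup_subset_of_comp_eventuallyEq hf hf' analyticAt_id rfl
      ⟨hh, h0, h', hh', h'0, hh'h, hhh'⟩ hff')

lemma dvd_of_mem_valueSemigroup {n e : ℕ} {f a : ℂ → Fin n → ℂ} (hf : IsCurveGerm n f)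
    (he : e ≠ 0) (ha : AnalyticAt ℂ a 0) (hfa : f =ᶠ[𝓝 0] fun t => a (t ^ e)) {v : ℕ}
    (hv : v ∈ valueSemigroup n f) : e ∣ v := by
  obtain ⟨φ, hφ, -, hv⟩ := (mem_valueSemigroup_iff hf).1 hv
  have ha0 : a 0 = 0 := by simpa [he, hf.2] using hfa.eq_of_nhds.symm
  have hφa : AnalyticAt ℂ (fun s => φ (a s)) 0 := hφ.comp_of_eq ha ha0
  have hord : (v : ℕ∞) = analyticOrderAt (fun s => φ (a s)) 0 * e := by
    rw [← hv, ← analyticOrderAt_comp_pow hφa he]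
    exact analyticOrderAt_congr (hfa.fun_comp φ)
  have hne : analyticOrderAt (fun s => φ (a s)) 0 ≠ ⊤ := fun htop => by
    rw [htop, ENat.top_mul (by exact_mod_cast he)] at hord
    exact ENat.natCast_ne_top v hord
  obtain ⟨o, ho⟩ := ENat.ne_top_iff_exists.1 hne
  rw [← ho] at hord
  exact ⟨o, by rw [mul_comm]; exact_mod_cast hord⟩

lemma valueSemigroup_eq_empty {n : ℕ} {f : ℂ → Fin n → ℂ} (hf : f =ᶠ[𝓝 0] 0) :
    valueSemigroup n f = ∅ := by
  have hfg : IsCurveGerm n f :=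
    ⟨analyticAt_const.congr hf.symm, hf.eq_of_nhds⟩
  refine Set.eq_empty_of_forall_notMem fun v hv => ?_
  obtain ⟨φ, -, hφ0, hv⟩ := (mem_valueSemigroup_iff hfg).1 hv
  have htop : analyticOrderAt (fun t => φ (f t)) 0 = ⊤ :=
    analyticOrderAt_eq_top.2 (hf.mono fun t ht => by simp [ht, hφ0])
  exact ENat.natCast_ne_top v (hv.symm.trans htop)

lemma invPairFst_eq_of_valueSemigroup_eq {n n' : ℕ} {f : ℂ → Fin n → ℂ} {f' : ℂ → Fin n' → ℂ}
    (h : valueSemigroup n f = valueSemigroup n' f') : invPairFst n f = invPairFst n' f' := by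
  rw [invPairFst, invPairFst, h]

lemma invPairSnd_eq_of_valueSemigroup_eq {n n' : ℕ} {f : ℂ → Fin n → ℂ} {f' : ℂ → Fin n' → ℂ}
    (h : valueSemigroup n f = valueSemigroup n' f') : invPairSnd n f = invPairSnd n' f' := by
  rw [invPairSnd, invPairSnd, h, invPairFst_eq_of_valueSemigroup_eq h]

lemma valueSemigroup_nonempty_of_invPairFst_pos {n : ℕ} {f : ℂ → Fin n → ℂ}
    (h : 0 < invPairFst n f) : (valueSemigroup n f).Nonempty :=
  (Nat.nonempty_of_pos_sInf h).mono fun _ hv => hv.1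

lemma invPairFst_le {n v : ℕ} {f : ℂ → Fin n → ℂ} (hv : v ∈ valueSemigroup n f) (h0 : 0 < v) :
    invPairFst n f ≤ v :=
  Nat.sInf_le ⟨hv, h0⟩

lemma exists_not_dvd_of_invPairSnd_pos {n : ℕ} {f : ℂ → Fin n → ℂ} (h : 0 < invPairSnd n f) :
    ∃ v ∈ valueSemigroup n f, ¬ invPairFst n f ∣ v :=
  let ⟨v, hv, _, hdvd⟩ := Nat.nonempty_of_pos_sInf h
  ⟨v, hv, hdvd⟩

lemma invPairSnd_le {n v : ℕ} {f : ℂ → Fin n → ℂ} (hv : v ∈ valueSemigroup n f) (h0 : 0 < v)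
    (hdvd : ¬ invPairFst n f ∣ v) : invPairSnd n f ≤ v :=
  Nat.sInf_le ⟨hv, (invPairFst_le hv h0).lt_of_ne fun h => hdvd (h ▸ dvd_rfl), hdvd⟩

end ValueSemigroup

/-! ### Curves paired with the cusp -/

section CuspEquiv

variable {N m : ℕ} {x y : Fin N}

/-- The curve `x = t²`, `y = t^(2m+1)` in `ℂ^N`, with the two coordinates `x` and `y` given by
their indices. -/
def cusp (m : ℕ) (x y : Fin N) (t : ℂ) : Fin N → ℂ :=
  Pi.single x (t ^ 2) + Pi.single y (t ^ (2 * m + 1))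

/-- `A`-equivalence of the pairs formed by the cusp and by `f`, respectively `f'`. -/
def CuspEquiv (m : ℕ) (x y : Fin N) (f f' : ℂ → Fin N → ℂ) : Prop :=
  AEquiv N 2 ![cusp m x y, f] ![cusp m x y, f']

lemma CuspEquiv.trans {f f' f'' : ℂ → Fin N → ℂ} (h : CuspEquiv m x y f f')
    (h' : CuspEquiv m x y f' f'') : CuspEquiv m x y f f'' :=
  AEquiv.trans h h'

lemma CuspEquiv.of_biholoGerms {f f' : ℂ → Fin N → ℂ} {g : (Fin N → ℂ) → Fin N → ℂ} {h₀ h : ℂ → ℂ}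
    (hg : IsBiholoGerm g) (hh₀ : IsBiholoGerm h₀) (hh : IsBiholoGerm h)
    (hcusp : (fun t => g (cusp m x y t)) =ᶠ[𝓝 0] fun t => cusp m x y (h₀ t))
    (hf : (fun t => g (f t)) =ᶠ[𝓝 0] fun t => f' (h t)) : CuspEquiv m x y f f' :=
  ⟨g, hg, ![h₀, h], Fin.forall_fin_two.2 ⟨hh₀, hh⟩, Fin.forall_fin_two.2 ⟨hcusp, hf⟩⟩

lemma CuspEquiv.of_fixes_cusp {f f' : ℂ → Fin N → ℂ} {g : (Fin N → ℂ) → Fin N → ℂ}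
    (hg : IsBiholoGerm g) (hcusp : ∀ t, g (cusp m x y t) = cusp m x y t)
    (hf : (fun t => g (f t)) =ᶠ[𝓝 0] f') : CuspEquiv m x y f f' :=
  .of_biholoGerms hg isBiholoGerm_id isBiholoGerm_id (.of_forall hcusp) hf

lemma CuspEquiv.of_reparam {f f' : ℂ → Fin N → ℂ} {h : ℂ → ℂ} (hh : IsBiholoGerm h)
    (hf : f =ᶠ[𝓝 0] fun t => f' (h t)) : CuspEquiv m x y f f' :=
  .of_biholoGerms isBiholoGerm_id isBiholoGerm_id hh .rfl hf

end CuspEquiv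

/-! ### Curves with `y = t²` -/

section EvenOddCurve

variable {N m k : ℕ} {x y : Fin N}

/-- The hyperplane on which the coordinate `y` vanishes. -/
abbrev coordHyperplane (y : Fin N) : Submodule ℂ (Fin N → ℂ) :=
  LinearMap.ker (LinearMap.proj y : (Fin N → ℂ) →ₗ[ℂ] ℂ)

lemma coordHyperplane_apply_self (v : coordHyperplane y) : (v : Fin N → ℂ) y = 0 :=
  v.2

lemma analyticAt_coordHyperplane_coe {E : Type*} [NormedAddCommGroup E] [NormedSpace ℂ E]
    {α : E → coordHyperplane y} {p : E} (hα : AnalyticAt ℂ α p) :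
    AnalyticAt ℂ (fun v => (α v : Fin N → ℂ)) p :=
  ((coordHyperplane y).subtypeL.analyticAt _).comp hα

lemma analyticAt_single (y : Fin N) (s : ℂ) :
    AnalyticAt ℂ (fun s : ℂ => (Pi.single y s : Fin N → ℂ)) s :=
  (ContinuousLinearMap.single ℂ (fun _ : Fin N => ℂ) y).analyticAt s

/-- The projection onto `coordHyperplane y` along the axis of `y`. -/
noncomputable def coordHyperplaneProj (y : Fin N) : (Fin N → ℂ) →L[ℂ] coordHyperplane y :=
  (ContinuousLinearMap.id ℂ _ -
    (ContinuousLinearMap.single ℂ (fun _ => ℂ) y).comp (.proj y)).codRestrict _ fun v => by simp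

lemma single_add_coordHyperplaneProj (v : Fin N → ℂ) :
    Pi.single y (v y) + (coordHyperplaneProj y v : Fin N → ℂ) = v := by
  simp [coordHyperplaneProj]

/-- The curve with `y = t²` whose other coordinates have even part `t⁴ α(t²)` and odd part
`t^(2k+1) β(t²)`. -/
def evenOddCurve (y : Fin N) (k : ℕ) (α β : ℂ → coordHyperplane y) (t : ℂ) : Fin N → ℂ :=
  Pi.single y (t ^ 2) + t ^ 4 • (α (t ^ 2) : Fin N → ℂ) + t ^ (2 * k + 1) • (β (t ^ 2) : Fin N → ℂ)

lemma evenOddCurve_apply_self (α β : ℂ → coordHyperplane y) (t : ℂ) :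
    evenOddCurve y k α β t y = t ^ 2 := by
  simp [evenOddCurve, coordHyperplane_apply_self]

lemma evenOddCurve_apply_of_ne (α β : ℂ → coordHyperplane y) (t : ℂ) {j : Fin N} (hj : j ≠ y) :
    evenOddCurve y k α β t j = t ^ 4 * (α (t ^ 2) : Fin N → ℂ) j +
      t ^ (2 * k + 1) * (β (t ^ 2) : Fin N → ℂ) j := by
  simp [evenOddCurve, hj]

lemma isCurveGerm_evenOddCurve {α β : ℂ → coordHyperplane y} (hα : AnalyticAt ℂ α 0)
    (hβ : AnalyticAt ℂ β 0) : IsCurveGerm N (evenOddCurve y k α β) := by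
  have hsq : AnalyticAt ℂ (fun t : ℂ => t ^ 2) 0 := by fun_prop
  have hαsq := analyticAt_coordHyperplane_coe (hα.fun_comp_of_eq hsq (by simp))
  have hβsq := analyticAt_coordHyperplane_coe (hβ.fun_comp_of_eq hsq (by simp))
  exact ⟨(((analyticAt_single y _).fun_comp_of_eq hsq rfl).add
    ((analyticAt_id.pow 4).smul hαsq)).add ((analyticAt_id.pow (2 * k + 1)).smul hβsq),
    by simp [evenOddCurve]⟩

lemma exists_evenOddCurve_comp_eventuallyEq {w : ℂ → Fin N → ℂ} (hw : AnalyticAt ℂ w 0) :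
    ∃ h, IsBiholoGerm h ∧ ∃ α β : ℂ → coordHyperplane y, AnalyticAt ℂ α 0 ∧ AnalyticAt ℂ β 0 ∧
      (fun t => Pi.single y (t ^ 2) + t ^ 3 • w t) =ᶠ[𝓝 0] fun t => evenOddCurve y 1 α β (h t) := by
  have hwy : AnalyticAt ℂ (fun t => w t y) 0 := analyticAt_pi_iff.1 hw y
  obtain ⟨h, hh, hpow⟩ : ∃ h, IsBiholoGerm h ∧
      (fun t => t ^ 2 + t ^ 3 * w t y) =ᶠ[𝓝 0] fun t => h t ^ 2 := by
    have ha : AnalyticAt ℂ (fun t => t ^ 2 + t ^ 3 * w t y) 0 := by fun_prop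
    refine exists_isBiholoGerm_pow_eq ha two_ne_zero (ha.analyticOrderAt_eq_natCast.2
      ⟨fun t => 1 + t * w t y, by fun_prop, by simp, .of_forall fun t => ?_⟩)
    simp only [sub_zero, smul_eq_mul]
    ring
  obtain ⟨η, hη, hηh⟩ := hh.exists_mul_comp_eq_self
  have hwη : AnalyticAt ℂ (fun s => coordHyperplaneProj y (w (s * η s))) 0 :=
    ((coordHyperplaneProj y).analyticAt _).comp (hw.comp_of_eq (analyticAt_id.mul hη) (by simp))
  obtain ⟨β, α, hβ, hα, hαβ⟩ := exists_even_odd ((hη.fun_pow 3).fun_smul hwη)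
  refine ⟨h, hh, α, β, hα, hβ, ?_⟩
  filter_upwards [hpow, hηh, eventuallyEq_comp hαβ hh.1.continuousAt hh.2.1] with t hpow hηh hαβ
  rw [hηh] at hαβ
  calc Pi.single y (t ^ 2) + t ^ 3 • w t
      = Pi.single y (t ^ 2 + t ^ 3 * w t y) +
          t ^ 3 • (coordHyperplaneProj y (w t) : Fin N → ℂ) := by
        nth_rw 1 [← single_add_coordHyperplaneProj (y := y) (w t)]
        rw [Pi.single_add, smul_add, add_assoc, ← Pi.single_smul', smul_eq_mul]
    _ = Pi.single y (h t ^ 2) +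
          h t ^ 3 •
            ((η (h t) ^ 3 • coordHyperplaneProj y (w t) : coordHyperplane y) : Fin N → ℂ) := by
        rw [hpow, Submodule.coe_smul, smul_smul, ← mul_pow, hηh]
    _ = evenOddCurve y 1 α β (h t) := by
        rw [hαβ, evenOddCurve, Submodule.coe_add, Submodule.coe_smul]
        module

lemma evenOddCurve_eventuallyEq_of_eventuallyEq_pow_smul {α β β' : ℂ → coordHyperplane y} {l : ℕ}
    (hβ : β =ᶠ[𝓝 0] fun s => s ^ l • β' s) :
    evenOddCurve y k α β =ᶠ[𝓝 0] evenOddCurve y (k + l) α β' := by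
  have hsq : ContinuousAt (fun t : ℂ => t ^ 2) 0 := by fun_prop
  filter_upwards [eventuallyEq_comp hβ hsq (by simp)] with t ht
  simp only [evenOddCurve, ht, Submodule.coe_smul, smul_smul]
  ring_nf

lemma even_of_mem_valueSemigroup_evenOddCurve {α β : ℂ → coordHyperplane y}
    (hα : AnalyticAt ℂ α 0) (hβ : AnalyticAt ℂ β 0) (h0 : β =ᶠ[𝓝 0] 0) {v : ℕ}
    (hv : v ∈ valueSemigroup N (evenOddCurve y k α β)) : 2 ∣ v := by
  have hsq : ContinuousAt (fun t : ℂ => t ^ 2) 0 := by fun_prop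
  refine dvd_of_mem_valueSemigroup (isCurveGerm_evenOddCurve hα hβ) two_ne_zero
    (a := fun s => Pi.single y s + s ^ 2 • (α s : Fin N → ℂ)) ?_ ?_ hv
  · exact (analyticAt_single y 0).add
      ((analyticAt_id.pow 2).smul (analyticAt_coordHyperplane_coe hα))
  · filter_upwards [eventuallyEq_comp h0 hsq (by simp)] with t ht
    simp [evenOddCurve, ht, ← pow_mul]

lemma exists_pullback_eq_odd_pow {α β : ℂ → coordHyperplane y} (hα : AnalyticAt ℂ α 0)
    (hβ : AnalyticAt ℂ β 0) (h0 : β 0 ≠ 0) :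
    ∃ T : (Fin N → ℂ) → ℂ, AnalyticAt ℂ T 0 ∧ T 0 = 0 ∧
      (fun t => T (evenOddCurve y k α β t)) =ᶠ[𝓝 0] fun t => t ^ (2 * k + 1) := by
  obtain ⟨j, hj⟩ : ∃ j, (β 0 : Fin N → ℂ) j ≠ 0 := by
    simpa only [ne_eq, Subtype.ext_iff, Function.ne_iff] using! h0
  have hjy : j ≠ y := by rintro rfl; exact hj (coordHyperplane_apply_self _)
  have hy := analyticAt_apply (𝕜 := ℂ) y 0
  have hαj := analyticAt_pi_iff.1 (analyticAt_coordHyperplane_coe (hα.fun_comp_of_eq hy rfl)) j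
  have hβj := analyticAt_pi_iff.1 (analyticAt_coordHyperplane_coe (hβ.fun_comp_of_eq hy rfl)) j
  have hβj' := analyticAt_pi_iff.1 (analyticAt_coordHyperplane_coe hβ) j
  have hsq : ContinuousAt (fun t : ℂ => t ^ 2) 0 := by fun_prop
  refine ⟨fun v => (v j - v y ^ 2 * (α (v y) : Fin N → ℂ) j) / (β (v y) : Fin N → ℂ) j,
    ((analyticAt_apply j 0).sub ((hy.pow 2).mul hαj)).div hβj hj, by simp, ?_⟩
  have hne : ∀ᶠ t in 𝓝 (0 : ℂ), (β (t ^ 2) : Fin N → ℂ) j ≠ 0 :=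
    (hβj'.continuousAt.comp_of_eq hsq (by simp)).eventually_ne (by simpa using hj)
  filter_upwards [hne] with t ht
  rw [evenOddCurve_apply_self, evenOddCurve_apply_of_ne _ _ _ hjy, div_eq_iff ht]
  ring

lemma two_mem_valueSemigroup_evenOddCurve {α β : ℂ → coordHyperplane y}
    (hα : AnalyticAt ℂ α 0) (hβ : AnalyticAt ℂ β 0) :
    2 ∈ valueSemigroup N (evenOddCurve y k α β) := by
  refine (mem_valueSemigroup_iff (isCurveGerm_evenOddCurve hα hβ)).2
    ⟨fun v => v y, analyticAt_apply y 0, rfl, ?_⟩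
  simp only [evenOddCurve_apply_self]
  exact analyticOrderAt_pow_zero 2

lemma odd_mem_valueSemigroup_evenOddCurve {α β : ℂ → coordHyperplane y}
    (hα : AnalyticAt ℂ α 0) (hβ : AnalyticAt ℂ β 0) (h0 : β 0 ≠ 0) :
    2 * k + 1 ∈ valueSemigroup N (evenOddCurve y k α β) := by
  obtain ⟨T, hT, hT0, hTf⟩ := exists_pullback_eq_odd_pow (k := k) hα hβ h0
  exact (mem_valueSemigroup_iff (isCurveGerm_evenOddCurve hα hβ)).2
    ⟨T, hT, hT0, (analyticOrderAt_congr hTf).trans (analyticOrderAt_pow_zero _)⟩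

lemma exists_unit_pullback_cusp_equation (hm : m ≠ 0) (hk : k ≠ 0) (hxy : x ≠ y)
    {α β : ℂ → coordHyperplane y} (hα : AnalyticAt ℂ α 0) (hβ : AnalyticAt ℂ β 0)
    {T : (Fin N → ℂ) → ℂ} (hT : AnalyticAt ℂ T 0)
    (hTf : (fun t => T (evenOddCurve y k α β t)) =ᶠ[𝓝 0] fun t => t ^ (2 * k + 1)) :
    ∃ U : (Fin N → ℂ) → ℂ, AnalyticAt ℂ U 0 ∧ U 0 ≠ 0 ∧
      (fun t => evenOddCurve y k α β t y ^ 2 - evenOddCurve y k α β t x ^ (2 * m + 1)) =ᶠ[𝓝 0]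
        fun t => t ^ 4 * U (evenOddCurve y k α β t) := by
  obtain ⟨m, rfl⟩ := Nat.exists_eq_succ_of_ne_zero hm
  obtain ⟨k, rfl⟩ := Nat.exists_eq_succ_of_ne_zero hk
  have hy := analyticAt_apply (𝕜 := ℂ) y 0
  have hαx := analyticAt_pi_iff.1 (analyticAt_coordHyperplane_coe (hα.fun_comp_of_eq hy rfl)) x
  have hβx := analyticAt_pi_iff.1 (analyticAt_coordHyperplane_coe (hβ.fun_comp_of_eq hy rfl)) x
  refine ⟨fun v => 1 - (v y ^ 2 * (α (v y) : Fin N → ℂ) x ^ 2 +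
      2 * T v * (α (v y) : Fin N → ℂ) x * (β (v y) : Fin N → ℂ) x +
      v y ^ (2 * k + 1) * (β (v y) : Fin N → ℂ) x ^ 2) * v x ^ (2 * m + 1), ?_, by simp, ?_⟩
  · have hx := analyticAt_apply (𝕜 := ℂ) x 0
    exact analyticAt_const.sub (((((hy.pow 2).mul (hαx.pow 2)).add
      (((analyticAt_const.mul hT).mul hαx).mul hβx)).add ((hy.pow _).mul (hβx.pow 2))).mul
        (hx.pow _))
  filter_upwards [hTf] with t ht
  simp only [ht, evenOddCurve_apply_self, evenOddCurve_apply_of_ne _ _ _ hxy, Nat.succ_eq_add_one]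
  ring

lemma hasFDerivAt_cusp_equation (hm : m ≠ 0) :
    HasFDerivAt (fun v : Fin N → ℂ => v y ^ 2 - v x ^ (2 * m + 1)) (0 : (Fin N → ℂ) →L[ℂ] ℂ) 0 := by
  have hd := ((hasFDerivAt_apply (𝕜 := ℂ) y (0 : Fin N → ℂ)).pow 2).fun_sub
    ((hasFDerivAt_apply (𝕜 := ℂ) x (0 : Fin N → ℂ)).pow (2 * m + 1))
  exact hd.congr_fderiv (by ext; simp [hm])

lemma cusp_equation_cusp (hxy : x ≠ y) (t : ℂ) :
    cusp m x y t y ^ 2 - cusp m x y t x ^ (2 * m + 1) = 0 := by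
  simp only [cusp, Pi.add_apply, Pi.single_eq_same, Pi.single_eq_of_ne hxy,
    Pi.single_eq_of_ne hxy.symm]
  ring

lemma exists_cuspEquiv_truncation (hm : m ≠ 0) (hk : k ≠ 0) (hxy : x ≠ y)
    {α β : ℂ → coordHyperplane y} (hα : AnalyticAt ℂ α 0) (hβ : AnalyticAt ℂ β 0) (h0 : β 0 ≠ 0) :
    ∃ b : coordHyperplane y, CuspEquiv m x y (evenOddCurve y k α β) fun t =>
      Pi.single y (t ^ 2) +
        t ^ (2 * k + 1) • ((β 0 + t ^ 2 • b : coordHyperplane y) : Fin N → ℂ) := by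
  obtain ⟨δ, hδ, hβδ⟩ : ∃ δ : ℂ → coordHyperplane y, AnalyticAt ℂ δ 0 ∧
      ∀ s, β s = β 0 + s • deriv β 0 + s ^ 2 • δ s :=
    (hβ.exists_eq_sum_add_pow_mul 2).imp fun δ hδ => by simpa [Finset.sum_range_succ] using hδ
  obtain ⟨T, hT, -, hTf⟩ := exists_pullback_eq_odd_pow (k := k) hα hβ h0
  obtain ⟨U, hU, hU0, hUf⟩ := exists_unit_pullback_cusp_equation hm hk hxy hα hβ hT hTf
  have hy := analyticAt_apply (𝕜 := ℂ) y 0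
  have hP := (hy.fun_pow 2).fun_sub ((analyticAt_apply (𝕜 := ℂ) x 0).fun_pow (2 * m + 1))
  have hV : AnalyticAt ℂ (fun v : Fin N → ℂ =>
      -(U v)⁻¹ • ((α (v y) + T v • δ (v y) : coordHyperplane y) : Fin N → ℂ)) 0 :=
    (hU.inv hU0).neg.smul (analyticAt_coordHyperplane_coe
      ((hα.fun_comp_of_eq hy rfl).add (hT.smul (hδ.fun_comp_of_eq hy rfl))))
  refine ⟨deriv β 0, .of_fixes_cusp (isBiholoGerm_add_smul hP hV (by simp)
    (hasFDerivAt_cusp_equation hm) (by simp)) (fun t => by rw [cusp_equation_cusp hxy]; simp) ?_⟩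
  have hUne : ∀ᶠ t in 𝓝 0, U (evenOddCurve y k α β t) ≠ 0 :=
    have hf : IsCurveGerm N (evenOddCurve y k α β) := isCurveGerm_evenOddCurve hα hβ
    (hU.continuousAt.comp_of_eq hf.1.continuousAt hf.2).eventually_ne
      (by simpa only [Function.comp_apply, hf.2] using hU0)
  filter_upwards [hTf, hUf, hUne] with t hTf hUf hUne
  have hPU : t ^ 4 * U (evenOddCurve y k α β t) * -(U (evenOddCurve y k α β t))⁻¹ = -t ^ 4 := by
    field_simp
  rw [hUf, smul_smul, hPU, hTf, evenOddCurve_apply_self, evenOddCurve, hβδ]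
  simp only [Submodule.coe_add, Submodule.coe_smul]
  module

end EvenOddCurve

/-! ### Normal forms -/

section NormalForms

variable {N m k : ℕ} {x y z : Fin N}

lemma cuspEquiv_straighten (hxy : x ≠ y) {φ : (Fin N → ℂ) →L[ℂ] ℂ} (hφx : φ (Pi.single x 1) = 0)
    (hφy : φ (Pi.single y 1) = 0) {a : coordHyperplane y} (hφa : φ a = 1) (b : coordHyperplane y)
    {c : Fin N → ℂ} (hφc : φ c ≠ 0) (p τ : ℂ → ℂ) :
    CuspEquiv m x y
      (fun t => Pi.single x (p t) + Pi.single y (t ^ 2) +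
        τ t • ((a + t ^ 2 • b : coordHyperplane y) : Fin N → ℂ))
      (fun t => Pi.single x (p t) + Pi.single y (t ^ 2) + τ t • c) := by
  have hφ (s r : ℂ) : φ (Pi.single x s + Pi.single y r) = 0 := by
    rw [← mul_one s, ← mul_one r, ← smul_eq_mul, ← smul_eq_mul, Pi.single_smul, Pi.single_smul]
    simp [hφx, hφy]
  have hy := analyticAt_apply (𝕜 := ℂ) y 0
  have hu : AnalyticAt ℂ (fun v : Fin N → ℂ => (1 + φ b * v y)⁻¹) 0 :=
    (analyticAt_const.add (analyticAt_const.mul hy)).inv (by simp)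
  have hΦ : HasFDerivAt (fun v => φ v * (1 + φ b * v y)⁻¹) φ 0 :=
    (φ.hasFDerivAt.fun_mul hu.differentiableAt.hasFDerivAt).congr_fderiv (by ext; simp)
  have hV : AnalyticAt ℂ (fun v : Fin N → ℂ => c - a - v y • (b : Fin N → ℂ)) 0 :=
    analyticAt_const.sub (hy.smul analyticAt_const)
  refine .of_fixes_cusp (isBiholoGerm_add_smul ((φ.analyticAt 0).mul hu) hV (by simp) hΦ
    (by simpa [hφa] using hφc)) (fun t => by simp [cusp, hφ]) ?_
  have hne : ∀ᶠ t in 𝓝 (0 : ℂ), 1 + φ b * t ^ 2 ≠ 0 :=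
    ContinuousAt.eventually_ne (by fun_prop) (by simp)
  filter_upwards [hne] with t ht
  have hφf : φ (Pi.single x (p t) + Pi.single y (t ^ 2) +
      τ t • ((a + t ^ 2 • b : coordHyperplane y) : Fin N → ℂ)) = τ t * (1 + φ b * t ^ 2) := by
    rw [map_add, hφ, zero_add, map_smul, Submodule.coe_add, Submodule.coe_smul, map_add, map_smul,
      hφa, smul_eq_mul, smul_eq_mul, mul_comm (t ^ 2)]
  have hfy : (Pi.single x (p t) + Pi.single y (t ^ 2) +
      τ t • ((a + t ^ 2 • b : coordHyperplane y) : Fin N → ℂ) : Fin N → ℂ) y = t ^ 2 := by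
    simp [hxy.symm, coordHyperplane_apply_self]
  rw [Pi.mul_apply, hφf, hfy, mul_assoc, mul_inv_cancel₀ ht, mul_one]
  simp only [Submodule.coe_add, Submodule.coe_smul]
  module

lemma exists_functional_of_apply_ne_zero {a : Fin N → ℂ} {j : Fin N} (hj : a j ≠ 0)
    (hjx : j ≠ x) (hjy : j ≠ y) (hzx : z ≠ x) (hzy : z ≠ y) :
    ∃ φ : (Fin N → ℂ) →L[ℂ] ℂ, φ (Pi.single x 1) = 0 ∧ φ (Pi.single y 1) = 0 ∧ φ a = 1 ∧
      φ (Pi.single z 1) ≠ 0 := by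
  by_cases hz : a z = 0
  · have hjz : j ≠ z := by rintro rfl; exact hj hz
    exact ⟨.proj z + (a j)⁻¹ • .proj j, by simp [*], by simp [*], by simp [*], by simp [*]⟩
  · exact ⟨(a z)⁻¹ • .proj z, by simp [*], by simp [*], by simp [*], by simp [*]⟩

/-- The weights of `x` and `y` are proportional to `2` and `2m+1`, so that the rescaling carries
the cusp to itself. -/
lemma cuspEquiv_of_weights (hxy : x ≠ y) {f f' : ℂ → Fin N → ℂ} (hfy : ∀ t, f t y = t ^ 2)
    {ρ : ℂ → ℂ} (hρ : AnalyticAt ℂ ρ 0) (hρ0 : ρ 0 ≠ 0) {w : Fin N → ℕ} (hwx : w x = 4)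
    (hwy : w y = 2 * (2 * m + 1))
    (hf : (fun t j => f t j * ρ (t ^ 2) ^ w j) =ᶠ[𝓝 0]
      fun t => f' (t * ρ (t ^ 2) ^ (2 * m + 1))) :
    CuspEquiv m x y f f' := by
  have hg : IsBiholoGerm fun (v : Fin N → ℂ) => v * fun j => ρ (v y) ^ w j :=
    isBiholoGerm_mul
      (AnalyticAt.pi fun j => (hρ.fun_comp_of_eq (analyticAt_apply y 0) rfl).pow (w j))
      (Pi.isUnit_iff.2 fun j => (pow_ne_zero _ hρ0).isUnit)
  have hh (q r : ℕ) (hq : q ≠ 0) : IsBiholoGerm fun t : ℂ => t * ρ (t ^ q) ^ r :=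
    isBiholoGerm_mul ((hρ.fun_comp_of_eq (analyticAt_id.fun_pow q) (by simp [hq])).pow r)
      (by simp [hq, hρ0])
  refine .of_biholoGerms hg (hh (2 * m + 1) 2 (by omega)) (hh 2 (2 * m + 1) two_ne_zero)
    (.of_forall fun t => ?_) ?_
  · ext j
    obtain rfl | hjx := eq_or_ne j x
    · simp only [cusp, Pi.mul_apply, Pi.add_apply, Pi.single_eq_same, Pi.single_eq_of_ne hxy,
        Pi.single_eq_of_ne hxy.symm, zero_add, hwx]
      ring
    obtain rfl | hjy := eq_or_ne j y
    · simp only [cusp, Pi.mul_apply, Pi.add_apply, Pi.single_eq_same, Pi.single_eq_of_ne hjx,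
        zero_add, hwy]
      ring
    · simp [cusp, hjx, hjy]
  · filter_upwards [hf] with t ht
    rw [← ht]
    ext j
    simp only [Pi.mul_apply, hfy]

/-- In `cuspEquiv_of_weights` the coordinate `x` becomes `t^(2k+1) ρ⁴ (aₓ + bₓ t²)`, to be equal to
`(t ρ^(2m+1))^(2k+1)`; so `ρ` is a root of `aₓ + bₓ t²` of degree `(2m+1)(2k+1) - 4`. -/
lemma cuspEquiv_normalize_x (hm : m ≠ 0) (hk : k ≠ 0) (hxy : x ≠ y) {a : coordHyperplane y}
    (hax : (a : Fin N → ℂ) x ≠ 0) (ha : ∀ j ≠ x, (a : Fin N → ℂ) j = 0) (b : coordHyperplane y) :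
    CuspEquiv m x y
      (fun t => Pi.single y (t ^ 2) +
        t ^ (2 * k + 1) • ((a + t ^ 2 • b : coordHyperplane y) : Fin N → ℂ))
      (fun t => Pi.single x (t ^ (2 * k + 1)) + Pi.single y (t ^ 2) +
        t ^ (2 * k + 3) • Function.update (b : Fin N → ℂ) x 0) := by
  obtain ⟨e, he, he0⟩ : ∃ e, (2 * m + 1) * (2 * k + 1) = e + 4 ∧ e ≠ 0 := by
    have : 3 * 3 ≤ (2 * m + 1) * (2 * k + 1) := Nat.mul_le_mul (by omega) (by omega)
    exact ⟨(2 * m + 1) * (2 * k + 1) - 4, by omega, by omega⟩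
  obtain ⟨ρ, hρ, hρ0, hρe⟩ := exists_analyticAt_pow_eq
    (u := fun s => (a : Fin N → ℂ) x + (b : Fin N → ℂ) x * s) (x := 0) (by fun_prop)
    (by simpa using hax) he0
  refine cuspEquiv_of_weights hxy (fun t => by simp [coordHyperplane_apply_self]) hρ hρ0
    (w := fun j => if j = x then 4 else if j = y then 2 * (2 * m + 1)
      else (2 * m + 1) * (2 * k + 3)) (by simp) (by simp [hxy.symm]) ?_
  have hsq : ContinuousAt (fun t : ℂ => t ^ 2) 0 := by fun_prop
  filter_upwards [eventuallyEq_comp hρe hsq (by simp)] with t ht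
  ext j
  obtain rfl | hjx := eq_or_ne j x
  · calc _ = t ^ (2 * k + 1) * ((a : Fin N → ℂ) j + (b : Fin N → ℂ) j * t ^ 2) * ρ (t ^ 2) ^ 4 := by
          simp only [Pi.add_apply, Pi.smul_apply, Pi.single_eq_of_ne hxy, Submodule.coe_add,
            Submodule.coe_smul, smul_eq_mul, if_true]
          ring
      _ = t ^ (2 * k + 1) * ρ (t ^ 2) ^ ((2 * m + 1) * (2 * k + 1)) := by
          rw [← ht, he, pow_add _ e, mul_assoc]
      _ = (t * ρ (t ^ 2) ^ (2 * m + 1)) ^ (2 * k + 1) := by rw [mul_pow, ← pow_mul]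
      _ = _ := by simp [hxy]
  obtain rfl | hjy := eq_or_ne j y
  · simp only [Pi.add_apply, Pi.smul_apply, Pi.single_eq_same, Pi.single_eq_of_ne hjx,
      coordHyperplane_apply_self, Function.update_of_ne hjx, if_neg hjx, if_true, smul_zero,
      mul_pow, ← pow_mul]
    ring
  · simp only [Pi.add_apply, Pi.smul_apply, Pi.single_eq_of_ne hjx, Pi.single_eq_of_ne hjy,
      Submodule.coe_add, Submodule.coe_smul, ha j hjx, Function.update_of_ne hjx, if_neg hjx,
      if_neg hjy, smul_eq_mul, mul_pow, ← pow_mul]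
    ring

lemma cuspEquiv_straighten_to_axis (hxy : x ≠ y) (hzx : z ≠ x) (hzy : z ≠ y)
    {a : coordHyperplane y} {j : Fin N} (hjx : j ≠ x) (ha : (a : Fin N → ℂ) j ≠ 0)
    (b : coordHyperplane y) (p τ : ℂ → ℂ) :
    CuspEquiv m x y
      (fun t => Pi.single x (p t) + Pi.single y (t ^ 2) +
        τ t • ((a + t ^ 2 • b : coordHyperplane y) : Fin N → ℂ))
      (fun t => Pi.single x (p t) + Pi.single y (t ^ 2) + Pi.single z (τ t)) := by
  have hjy : j ≠ y := by rintro rfl; exact ha (coordHyperplane_apply_self a)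
  obtain ⟨φ, hφx, hφy, hφa, hφz⟩ := exists_functional_of_apply_ne_zero ha hjx hjy hzx hzy
  simpa only [← Pi.single_smul', smul_eq_mul, mul_one] using
    cuspEquiv_straighten hxy hφx hφy hφa b hφz p τ

lemma cuspEquiv_normalForm (hm : m ≠ 0) (hk : k ≠ 0) (hxy : x ≠ y) (hzx : z ≠ x) (hzy : z ≠ y)
    {a : coordHyperplane y} (ha : a ≠ 0) (b : coordHyperplane y) {f : ℂ → Fin N → ℂ}
    (hf : CuspEquiv m x y f fun t => Pi.single y (t ^ 2) +
      t ^ (2 * k + 1) • ((a + t ^ 2 • b : coordHyperplane y) : Fin N → ℂ)) :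
    CuspEquiv m x y f (fun t => Pi.single x (t ^ (2 * k + 1)) + Pi.single y (t ^ 2)) ∨
    CuspEquiv m x y f (fun t => Pi.single x (t ^ (2 * k + 1)) + Pi.single y (t ^ 2) +
      Pi.single z (t ^ (2 * k + 3))) ∨
    CuspEquiv m x y f (fun t => Pi.single y (t ^ 2) + Pi.single z (t ^ (2 * k + 1))) := by
  by_cases hax : ∃ j ≠ x, (a : Fin N → ℂ) j ≠ 0
  · obtain ⟨j, hjx, haj⟩ := hax
    refine .inr (.inr (hf.trans ?_))
    simpa only [Pi.single_zero, zero_add] using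
      cuspEquiv_straighten_to_axis hxy hzx hzy hjx haj b (fun _ => 0) (fun t => t ^ (2 * k + 1))
  push Not at hax
  have hax0 : (a : Fin N → ℂ) x ≠ 0 := fun h0 => ha <| Subtype.ext <| funext fun j =>
    if hj : j = x then hj ▸ h0 else hax j hj
  have hf' := hf.trans (cuspEquiv_normalize_x hm hk hxy hax0 hax b)
  by_cases hb : ∀ j ≠ x, (b : Fin N → ℂ) j = 0
  · have hb0 : Function.update (b : Fin N → ℂ) x 0 = 0 := by
      ext j
      obtain rfl | hj := eq_or_ne j x <;> simp [*]
    exact .inl (by simpa only [hb0, smul_zero, add_zero] using hf')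
  · push Not at hb
    obtain ⟨j, hjx, hbj⟩ := hb
    have hby : Function.update (b : Fin N → ℂ) x 0 ∈ coordHyperplane y := by
      simp [hxy.symm, coordHyperplane_apply_self]
    refine .inr (.inl (hf'.trans ?_))
    simpa only [smul_zero, add_zero] using
      cuspEquiv_straighten_to_axis (a := ⟨_, hby⟩) hxy hzx hzy hjx
        (by simpa only [Function.update_of_ne hjx] using hbj) 0 (fun t => t ^ (2 * k + 1))
        (fun t => t ^ (2 * k + 3))

lemma two_mem_valueSemigroup {f w : ℂ → Fin N → ℂ} (hf : IsCurveGerm N f)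
    (hw : AnalyticAt ℂ w 0) (hfw : f =ᶠ[𝓝 0] fun t => Pi.single y (t ^ 2) + t ^ 3 • w t) :
    2 ∈ valueSemigroup N f := by
  obtain ⟨h, hh, α, β, hα, hβ, hwh⟩ := exists_evenOddCurve_comp_eventuallyEq (y := y) hw
  exact valueSemigroup_eq_of_reparam hf (isCurveGerm_evenOddCurve hα hβ) hh (hfw.trans hwh) ▸
    two_mem_valueSemigroup_evenOddCurve hα hβ

lemma exists_reparam_evenOddCurve {f w : ℂ → Fin N → ℂ} (hf : IsCurveGerm N f)
    (hw : AnalyticAt ℂ w 0) (hfw : f =ᶠ[𝓝 0] fun t => Pi.single y (t ^ 2) + t ^ 3 • w t) {q : ℕ}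
    (hq : q ∈ valueSemigroup N f) (hq2 : ¬ 2 ∣ q) :
    ∃ k ≠ 0, ∃ α β : ℂ → coordHyperplane y, AnalyticAt ℂ α 0 ∧ AnalyticAt ℂ β 0 ∧ β 0 ≠ 0 ∧
      ∃ h, IsBiholoGerm h ∧ f =ᶠ[𝓝 0] fun t => evenOddCurve y k α β (h t) := by
  obtain ⟨h, hh, α, β, hα, hβ, hwh⟩ := exists_evenOddCurve_comp_eventuallyEq (y := y) hw
  have hfh := hfw.trans hwh
  have hβ0 : ¬ β =ᶠ[𝓝 0] 0 := fun h0 => hq2 <| even_of_mem_valueSemigroup_evenOddCurve hα hβ h0 <|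
    valueSemigroup_eq_of_reparam hf (isCurveGerm_evenOddCurve hα hβ) hh hfh ▸ hq
  obtain ⟨l, β', hβ', hβ'0, hβl⟩ := exists_eventuallyEq_pow_smul_of_analyticAt hβ hβ0
  exact ⟨1 + l, by omega, α, β', hα, hβ', hβ'0, h, hh, hfh.trans <| eventuallyEq_comp
    (evenOddCurve_eventuallyEq_of_eventuallyEq_pow_smul hβl) hh.1.continuousAt hh.2.1⟩

theorem exists_cuspEquiv_normalForm (hm : m ≠ 0) (hxy : x ≠ y) (hzx : z ≠ x) (hzy : z ≠ y)
    {f w : ℂ → Fin N → ℂ} (hf : IsCurveGerm N f) (hw : AnalyticAt ℂ w 0)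
    (hfw : f =ᶠ[𝓝 0] fun t => Pi.single y (t ^ 2) + t ^ 3 • w t)
    (hinv : 2 < invPairFst N f ∨ (invPairFst N f = 2 ∧ 2 * m + 1 ≤ invPairSnd N f)) :
    ∃ k, m ≤ k ∧
      (CuspEquiv m x y f (fun t => Pi.single x (t ^ (2 * k + 1)) + Pi.single y (t ^ 2)) ∨
        CuspEquiv m x y f (fun t => Pi.single x (t ^ (2 * k + 1)) + Pi.single y (t ^ 2) +
          Pi.single z (t ^ (2 * k + 3))) ∨
        CuspEquiv m x y f (fun t => Pi.single y (t ^ 2) + Pi.single z (t ^ (2 * k + 1)))) := by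
  have hp2 := invPairFst_le (two_mem_valueSemigroup hf hw hfw) two_pos
  obtain ⟨hp, hq⟩ := hinv.resolve_left hp2.not_gt
  obtain ⟨q, hqS, hq2⟩ := exists_not_dvd_of_invPairSnd_pos (by omega : 0 < invPairSnd N f)
  obtain ⟨k, hk, α, β, hα, hβ, hβ0, h, hh, hfh⟩ :=
    exists_reparam_evenOddCurve hf hw hfw hqS (hp ▸ hq2)
  have hkS : 2 * k + 1 ∈ valueSemigroup N f :=
    valueSemigroup_eq_of_reparam hf (isCurveGerm_evenOddCurve hα hβ) hh hfh ▸
      odd_mem_valueSemigroup_evenOddCurve hα hβ hβ0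
  have hmk : 2 * m + 1 ≤ 2 * k + 1 := hq.trans (invPairSnd_le hkS (by omega) (by rw [hp]; omega))
  obtain ⟨b, hb⟩ := exists_cuspEquiv_truncation hm hk hxy hα hβ hβ0
  exact ⟨k, by omega, cuspEquiv_normalForm hm hk hxy hzx hzy hβ0 b
    ((CuspEquiv.of_reparam hh hfh).trans hb)⟩

end NormalForms

/-! ### Padding with zero coordinates -/

section Padding

/-- The linear map underlying `pad`: appending zero coordinates or, when `n < d`, dropping the last
`d - n` coordinates. -/
noncomputable def padCLM (d n : ℕ) : (Fin d → ℂ) →L[ℂ] Fin n → ℂ :=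
  .pi fun j => if hj : (j : ℕ) < d then .proj ⟨j, hj⟩ else 0

variable {d M n : ℕ} {f : ℂ → Fin d → ℂ}

lemma pad_eq_padCLM (t : ℂ) : pad d n f t = padCLM d n (f t) := by
  ext j
  by_cases hj : (j : ℕ) < d <;> simp [pad, padCLM, hj]

lemma pad_pad (h : d ≤ M) : pad M n (pad d M f) = pad d n f := by
  funext t j
  simp only [pad]
  split_ifs <;> first | rfl | omega

lemma pad_pad_cancel (h : d ≤ n) : pad n d (pad d n f) = f := by
  funext t j
  simp [pad, j.2.trans_le h]

lemma IsCurveGerm.pad (hf : IsCurveGerm d f) : IsCurveGerm n (pad d n f) := by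
  simp only [IsCurveGerm, funext pad_eq_padCLM]
  exact ⟨((padCLM d n).analyticAt _).fun_comp hf.1, by rw [hf.2, map_zero]⟩

lemma valueSemigroup_pad (h : d ≤ n) (hf : IsCurveGerm d f) :
    valueSemigroup n (pad d n f) = valueSemigroup d f := by
  refine (valueSemigroup_subset_of_comp_eventuallyEq (g := padCLM d n) hf hf.pad
    (ContinuousLinearMap.analyticAt _ _) (map_zero _) isBiholoGerm_id ?_).antisymm
    (valueSemigroup_subset_of_comp_eventuallyEq (g := padCLM n d) hf.pad hf
      (ContinuousLinearMap.analyticAt _ _) (map_zero _) isBiholoGerm_id ?_)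
  · exact .of_forall fun t => (pad_eq_padCLM t).symm
  · exact .of_forall fun t => by simp only [← pad_eq_padCLM, pad_pad_cancel h]

lemma pad_two (a b : ℂ → ℂ) :
    pad 2 (n + 3) (fun t => ![a t, b t]) = fun t => Pi.single 0 (a t) + Pi.single 1 (b t) := by
  funext t j
  obtain ⟨_ | _ | j, hj⟩ := j <;> simp [pad, Fin.ext_iff]

lemma pad_three (a b c : ℂ → ℂ) : pad 3 (n + 3) (fun t => ![a t, b t, c t]) =
    fun t => Pi.single 0 (a t) + Pi.single 1 (b t) + Pi.single 2 (c t) := by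
  funext t j
  obtain ⟨_ | _ | _ | j, hj⟩ := j <;>
    simp [pad, Pi.single_apply, Fin.ext_iff, Fin.val_two, -Fin.coe_ofNat_eq_mod]

lemma CuspEquiv.stablyAEquiv {m N : ℕ} {x y : Fin N} {F : Fin 2 → ℂ → Fin d → ℂ}
    {g₀ g : ℂ → Fin M → ℂ} (hd : d ≤ N) (hM : M ≤ N) (hF : pad d N (F 0) = cusp m x y)
    (hg₀ : pad M N g₀ = cusp m x y)
    (h : CuspEquiv m x y (pad d N (F 1)) (pad M N g)) :
    StablyAEquiv d M 2 F ![g₀, g] := by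
  refine ⟨N, hd, hM, ?_⟩
  have hsrc : (fun i => pad d N (F i)) = ![cusp m x y, pad d N (F 1)] := by
    ext i : 1
    fin_cases i <;> simp [hF]
  have htgt : (fun i => pad M N (![g₀, g] i)) = ![cusp m x y, pad M N g] := by
    ext i : 1
    fin_cases i <;> simp [hg₀]
  rwa [hsrc, htgt]

lemma exists_eventuallyEq_add_pow_smul_of_jet_eq {g : ℂ → Fin d → ℂ} (hf : AnalyticAt ℂ f 0)
    (hg : AnalyticAt ℂ g 0) (h : jet d n f = jet d n g) :
    ∃ w : ℂ → Fin d → ℂ, AnalyticAt ℂ w 0 ∧ f =ᶠ[𝓝 0] fun t => g t + t ^ (n + 1) • w t := by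
  have hle : ((n + 1 : ℕ) : ℕ∞) ≤ analyticOrderAt (f - g) 0 := by
    rw [natCast_le_analyticOrderAt_iff_iteratedDeriv_eq_zero (hf.sub hg)]
    intro i hi
    rw [iteratedDeriv_sub hf.contDiffAt hg.contDiffAt]
    exact sub_eq_zero.2 (congrFun h ⟨i, hi⟩)
  obtain ⟨w, hw, hfg⟩ := (natCast_le_analyticOrderAt (hf.sub hg)).1 hle
  refine ⟨w, hw, hfg.mono fun t ht => ?_⟩
  rw [← sub_eq_iff_eq_add', ← Pi.sub_apply, ht, sub_zero]

end Padding

/-! ### The ambient dimension -/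

section AmbientDimension

variable {d m : ℕ} {F : Fin 2 → ℂ → Fin d → ℂ}

lemma exists_pad_cusp_eq_of_lt_two (hd : d < 2) {v : Fin d → ℂ} {ε : ℝ} (hε : 0 < ε)
    (hv : ‖v‖ < ε ^ 2) :
    ∃ s : ℂ, ‖s‖ < ε ∧ pad 2 d (fun t => ![t ^ 2, t ^ (2 * m + 1)]) s = v := by
  obtain rfl | rfl : d = 0 ∨ d = 1 := by omega
  · exact ⟨0, by simpa using hε, Subsingleton.elim _ _⟩
  · obtain ⟨s, hs⟩ := IsAlgClosed.exists_pow_nat_eq (v 0) two_pos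
    refine ⟨s, lt_of_pow_lt_pow_left₀ 2 hε.le ?_, ?_⟩
    · rw [← norm_pow, hs]
      exact (norm_le_pi_norm v 0).trans_lt hv
    · ext j
      rw [Subsingleton.elim j 0, ← hs]
      simp [pad]

lemma eventuallyEq_zero_of_lt_two (hF : IsMultigerm d 2 F)
    (h1 : F 0 = pad 2 d fun t => ![t ^ 2, t ^ (2 * m + 1)]) (hd : d < 2) : F 1 =ᶠ[𝓝 0] 0 := by
  obtain ⟨ε, hε, hdisj⟩ := hF.2
  have hsmall : ∀ᶠ t in 𝓝 0, ‖F 1 t‖ < ε ^ 2 :=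
    (hF.1 1).1.continuousAt.norm.eventually_lt_const (by simpa [(hF.1 1).2] using pow_pos hε 2)
  filter_upwards [hsmall, Metric.ball_mem_nhds (0 : ℂ) hε] with t ht htε
  obtain ⟨s, hsε, hs⟩ := exists_pad_cusp_eq_of_lt_two (m := m) hd hε ht
  have heq : F 0 s = F 1 t := by rw [h1, hs]
  rw [← heq]
  exact hdisj 0 1 (by decide) s t hsε (by simpa using htε) heq

/-- In ambient dimension at most `1` the cusp fills a neighbourhood of the origin, which leaves no
room for a second component. -/
lemma two_le_dim (hF : IsMultigerm d 2 F)
    (h1 : F 0 = pad 2 d fun t => ![t ^ 2, t ^ (2 * m + 1)]) (hp : 0 < invPairFst d (F 1)) :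
    2 ≤ d := by
  by_contra! hd
  have hne := valueSemigroup_nonempty_of_invPairFst_pos hp
  exact hne.ne_empty (valueSemigroup_eq_empty (eventuallyEq_zero_of_lt_two hF h1 hd))

end AmbientDimension

lemma exists_pad_eventuallyEq {d : ℕ} {f : ℂ → Fin d → ℂ} (hd : 2 ≤ d) (hf : IsCurveGerm d f)
    (hjet : jet d 2 f = jet d 2 (pad 2 d fun t => ![(0 : ℂ), t ^ 2])) :
    ∃ w : ℂ → Fin (d + 3) → ℂ, AnalyticAt ℂ w 0 ∧
      pad d (d + 3) f =ᶠ[𝓝 0] fun t => Pi.single 1 (t ^ 2) + t ^ 3 • w t := by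
  have hg : IsCurveGerm 2 fun t => ![(0 : ℂ), t ^ 2] := by
    refine ⟨AnalyticAt.pi fun j => ?_, by simp⟩
    fin_cases j
    exacts [analyticAt_const, analyticAt_id.fun_pow 2]
  obtain ⟨w, hw, hfw⟩ := exists_eventuallyEq_add_pow_smul_of_jet_eq hf.1 hg.pad.1 hjet
  refine ⟨fun t => padCLM d (d + 3) (w t), ((padCLM d (d + 3)).analyticAt _).fun_comp hw, ?_⟩
  filter_upwards [hfw] with t ht
  rw [pad_eq_padCLM, ht, map_add, map_smul, ← pad_eq_padCLM, pad_pad hd, pad_two]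
  simp only [Pi.single_zero, zero_add, Nat.reduceAdd]

end CurveSing

open CurveSing in
theorem classification_first_cusp_second_mult_two_general (d m : ℕ) (hm : 1 ≤ m)
    (F : Fin 2 → ℂ → Fin d → ℂ) (hF : IsMultigerm d 2 F)
    (h1 : F 0 = pad 2 d fun t => ![t ^ 2, t ^ (2 * m + 1)])
    (h2 : jet d 2 (F 1) = jet d 2 (pad 2 d fun t => ![(0 : ℂ), t ^ 2]))
    (hinv : 2 < invPairFst d (F 1) ∨
      (invPairFst d (F 1) = 2 ∧ 2 * m + 1 ≤ invPairSnd d (F 1))) :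
    (∃ n : ℕ, m ≤ n ∧ StablyAEquiv d 2 2 F
      ![fun t => ![t ^ 2, t ^ (2 * m + 1)], fun t => ![t ^ (2 * n + 1), t ^ 2]]) ∨
    (∃ n : ℕ, m ≤ n ∧ StablyAEquiv d 3 2 F
      ![pad 2 3 fun t => ![t ^ 2, t ^ (2 * m + 1)],
        fun t => ![t ^ (2 * n + 1), t ^ 2, t ^ (2 * n + 3)]]) ∨
    (∃ n : ℕ, m ≤ n ∧ StablyAEquiv d 3 2 F
      ![pad 2 3 fun t => ![t ^ 2, t ^ (2 * m + 1)],
        fun t => ![(0 : ℂ), t ^ 2, t ^ (2 * n + 1)]]) := by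
  have hd : 2 ≤ d := two_le_dim hF h1 (by omega)
  have hS : valueSemigroup (d + 3) (pad d (d + 3) (F 1)) = valueSemigroup d (F 1) :=
    valueSemigroup_pad (by omega) (hF.1 1)
  have hp := invPairFst_eq_of_valueSemigroup_eq hS
  have hq := invPairSnd_eq_of_valueSemigroup_eq hS
  have hcusp : pad 2 (d + 3) (fun t => ![t ^ 2, t ^ (2 * m + 1)]) = cusp m 0 1 := pad_two _ _
  have hF0 : pad d (d + 3) (F 0) = cusp m 0 1 := by rw [h1, pad_pad hd, hcusp]
  obtain ⟨w, hw, hfw⟩ := exists_pad_eventuallyEq hd (hF.1 1) h2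
  obtain ⟨k, hk, h | h | h⟩ := exists_cuspEquiv_normalForm (m := m) (x := 0) (z := 2) (by omega)
    (by simp) (by simp [Fin.ext_iff, Fin.val_two, -Fin.coe_ofNat_eq_mod])
    (by simp [Fin.ext_iff, Fin.val_two, -Fin.coe_ofNat_eq_mod]) (hF.1 1).pad hw hfw
    (by rwa [hp, hq])
  · exact .inl ⟨k, hk, CuspEquiv.stablyAEquiv (by omega) (by omega) hF0 hcusp (by rwa [pad_two])⟩
  · exact .inr (.inl ⟨k, hk, CuspEquiv.stablyAEquiv (by omega) (by omega) hF0
      ((pad_pad (by omega)).trans hcusp) (by rwa [pad_three])⟩)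
  · exact .inr (.inr ⟨k, hk, CuspEquiv.stablyAEquiv (by omega) (by omega) hF0
      ((pad_pad (by omega)).trans hcusp) (by simpa only [pad_three, Pi.single_zero, zero_add])⟩)

open CurveSing in
/-- Classification of simple pairs with first component `(t², t^{2m+1})`, second
component of `2`-jet `(0, t², 0, …, 0)` and invariant pair `≥ (2, 2m+1)`
(lexicographically). -/
theorem classification_first_cusp_second_mult_two (d m : ℕ) (hm : 1 ≤ m)
    (F : Fin 2 → ℂ → Fin d → ℂ)
    (hF : IsMultigerm d 2 F) (hsimple : Simple d 2 F)
    (h1 : F 0 = pad 2 d fun t => ![t ^ 2, t ^ (2*m+1)])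
    (h2 : jet d 2 (F 1) = jet d 2 (pad 2 d fun t => ![(0 : ℂ), t ^ 2]))
    (hinv : 2 < invPairFst d (F 1) ∨
      (invPairFst d (F 1) = 2 ∧ 2*m+1 ≤ invPairSnd d (F 1))) :
    (∃ n : ℕ, m ≤ n ∧ StablyAEquiv d 2 2 F
      ![fun t => ![t ^ 2, t ^ (2*m+1)], fun t => ![t ^ (2*n+1), t ^ 2]]) ∨
    (∃ n : ℕ, m ≤ n ∧ StablyAEquiv d 3 2 F
      ![pad 2 3 fun t => ![t ^ 2, t ^ (2*m+1)],
        fun t => ![t ^ (2*n+1), t ^ 2, t ^ (2*n+3)]]) ∨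
    (∃ n : ℕ, m ≤ n ∧ StablyAEquiv d 3 2 F
      ![pad 2 3 fun t => ![t ^ 2, t ^ (2*m+1)],
        fun t => ![(0 : ℂ), t ^ 2, t ^ (2*n+1)]]) := by
  exact classification_first_cusp_second_mult_two_general d m hm F hF h1 h2 hinv
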